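/- For a finite graph G, the determinant of the signless Laplacian Q = D + A equals Σ_H 4^{c(H)}, where the sum runs over all spanning subgraphs H of G each of whose connected components is an odd-unicyclic graph (contains exactly one cycle, of odd length), and c(H) is the number of components of H. -/

import Mathlib

/-- A finite connected graph is odd-unicyclic if it has exactly one cycle
(equivalently, as many edges as vertices) and every cycle in it has odd
length. -/
def IsOddUnicyclic {W : Type*} (K : SimpleGraph W) : Prop :=
  K.Connected ∧ K.edgeSet.ncard = Nat.card W ∧
    ∀ (v : W) (w : K.Walk v v), w.IsCycle → Odd w.length

/-- Every connected component of `H` induces an odd-unicyclic graph. -/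
def AllCompsOddUnicyclic {V : Type*} (H : SimpleGraph V) : Prop :=
  ∀ c : H.ConnectedComponent, IsOddUnicyclic (H.induce c.supp)

section Aux
open Finset
open scoped Classical

noncomputable def slRow {V : Type*} (v u : V) : V → ℤ :=
  fun w => (if w = v then 1 else 0) + (if w = u then 1 else 0)

noncomputable def slQ {V : Type*} [Fintype V] (H : SimpleGraph V) : Matrix V V ℤ :=
  Matrix.of fun v => ∑ u ∈ univ.filter (fun u => H.Adj v u), slRow v u

noncomputable def adjI {V : Type*} (K : SimpleGraph V) (v u : V) : ℤ := if K.Adj v u then 1 else 0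

lemma slQ_apply {V : Type*} [Fintype V] (H : SimpleGraph V) (v w : V) :
    slQ H v w = (if w = v then ∑ u, adjI H v u else 0) + adjI H v w := by
  simp only [slQ, slRow, adjI, Matrix.of_apply, Finset.sum_apply, Finset.sum_add_distrib]
  congr 1
  · split_ifs with h <;> simp [h]
  · simp

noncomputable def slD {V : Type*} [Fintype V] (H : SimpleGraph V) : ℤ := (slQ H).det

lemma deg_adjI {V : Type*} [Fintype V] (H : SimpleGraph V) (v : V) [Fintype (H.neighborSet v)] :
    ∑ u, adjI H v u = (H.degree v : ℤ) := by
  simp only [adjI]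
  rw [Finset.sum_boole, SimpleGraph.degree]
  congr 2
  ext u
  simp

lemma slQ_eq {V : Type*} [Fintype V] [DecidableEq V] (G : SimpleGraph V) [DecidableRel G.Adj] :
    Matrix.diagonal (fun v => (G.degree v : ℤ)) + G.adjMatrix ℤ = slQ G := by
  ext v w
  rw [slQ_apply]
  simp only [Matrix.add_apply, Matrix.diagonal_apply, SimpleGraph.adjMatrix_apply]
  congr 1
  · by_cases h : v = w
    · subst h
      simp only [if_true]
      exact (deg_adjI G v).symm
    · simp [h, Ne.symm h]
  · rw [adjI]; congr

/-- the graph of a function -/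
def fnGraph {V : Type*} (g : V → V) : SimpleGraph V :=
  SimpleGraph.fromEdgeSet (Set.range fun v => s(v, g v))

noncomputable def fnDet {V : Type*} [Fintype V] (g : V → V) : ℤ :=
  (Matrix.of fun v => slRow v (g v)).det

lemma valid_iff {V : Type*} (H : SimpleGraph V) (g : V → V) :
    (∀ v, H.Adj v (g v)) ↔ (∀ v, g v ≠ v) ∧ fnGraph g ≤ H := by
  constructor
  · intro h
    refine ⟨fun v e => (h v).ne e.symm, ?_⟩
    intro a b hab
    rw [fnGraph, SimpleGraph.fromEdgeSet_adj] at hab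
    obtain ⟨⟨v, hv⟩, -⟩ := hab
    have := h v
    rw [← SimpleGraph.mem_edgeSet] at this ⊢
    rw [← hv]; exact this
  · rintro ⟨h1, h2⟩ v
    apply h2
    rw [fnGraph, SimpleGraph.fromEdgeSet_adj]
    exact ⟨⟨v, rfl⟩, (h1 v).symm⟩

lemma det_slQ_expand {V : Type*} [Fintype V] (H : SimpleGraph V) :
    slD H = ∑ g : V → V, if (∀ v, g v ≠ v) ∧ fnGraph g ≤ H then fnDet g else 0 := by
  have h := (Matrix.detRowAlternating (n := V) (R := ℤ)).toMultilinearMap.map_sum_finset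
    (fun v u => slRow v u) (fun v => univ.filter (fun u => H.Adj v u))
  rw [← Finset.sum_filter]
  refine Eq.trans (show slD H = _ from h) (Finset.sum_congr ?_ fun _ _ => rfl)
  ext g
  simp [Fintype.mem_piFinset, ← valid_iff]

lemma slRow_eq {V : Type*} {a b c d : V} (h : s(a, b) = s(c, d)) : slRow a b = slRow c d := by
  rw [Sym2.eq_iff] at h
  rcases h with ⟨rfl, rfl⟩ | ⟨rfl, rfl⟩
  · rfl
  · ext w; simp [slRow, add_comm]

lemma fnDet_ne {V : Type*} [Fintype V] (g : V → V) (hg : ∀ v, g v ≠ v) (h : fnDet g ≠ 0) :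
    (fnGraph g).edgeSet.ncard = Nat.card V := by
  have hinj : Function.Injective fun v => s(v, g v) := by
    intro v w hvw
    by_contra hne
    exact h (Matrix.det_zero_of_row_eq hne (slRow_eq hvw))
  have : (fnGraph g).edgeSet = Set.range fun v => s(v, g v) := by
    rw [fnGraph, SimpleGraph.edgeSet_fromEdgeSet]
    ext e
    simp only [Set.mem_sdiff, Set.mem_range]
    constructor
    · exact fun h => h.1
    · rintro ⟨v, rfl⟩
      exact ⟨⟨v, rfl⟩, by simpa using (hg v).symm⟩
  rw [this, ← Set.image_univ, Set.ncard_image_of_injective _ hinj, Set.ncard_univ]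

noncomputable def slF {V : Type*} [Fintype V] (H : SimpleGraph V) : ℤ :=
  ∑ g : V → V, if (∀ v, g v ≠ v) ∧ fnGraph g = H then fnDet g else 0

lemma det_slQ_sum {V : Type*} [Fintype V] (G : SimpleGraph V) :
    slD G = ∑ H : SimpleGraph V, if H ≤ G then slF H else 0 := by
  rw [det_slQ_expand]
  simp only [slF, ← Finset.sum_filter]
  simp only [Finset.sum_filter]
  rw [← Finset.sum_filter]
  simp only [Finset.sum_filter]
  have : ∀ H : SimpleGraph V, (if H ≤ G then ∑ g : V → V,
      (if (∀ v, g v ≠ v) ∧ fnGraph g = H then fnDet g else 0) else 0) =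
      ∑ g : V → V, if fnGraph g = H then
        (if (∀ v, g v ≠ v) ∧ fnGraph g ≤ G then fnDet g else 0) else 0 := by
    intro H
    split_ifs with h
    · refine Finset.sum_congr rfl fun g _ => ?_
      by_cases e : fnGraph g = H
      · subst e; simp [h]
      · simp [e]
    · symm
      apply Finset.sum_eq_zero
      intro g _
      by_cases e : fnGraph g = H
      · subst e; simp [h]
      · simp [e]
  rw [Finset.sum_congr rfl fun H _ => this H, Finset.sum_comm]
  simp

lemma slF_zero {V : Type*} [Fintype V] (H : SimpleGraph V) (h : H.edgeSet.ncard ≠ Nat.card V) :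
    slF H = 0 := by
  apply Finset.sum_eq_zero
  intro g _
  split_ifs with hg
  · by_contra h0
    apply h
    rw [← hg.2]
    exact fnDet_ne g hg.1 h0
  · rfl

lemma slF_eq {V : Type*} [Fintype V] (H : SimpleGraph V) (h : H.edgeSet.ncard = Nat.card V) :
    slF H = slD H := by
  rw [det_slQ_expand]
  refine Finset.sum_congr rfl fun g _ => ?_
  by_cases e : fnGraph g = H
  · simp [e]
  · rw [if_neg (fun h => e h.2)]
    split_ifs with h2
    · by_contra h0
      apply e
      have h3 := fnDet_ne g h2.1 (Ne.symm h0)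
      rw [← SimpleGraph.edgeSet_inj]
      apply Set.eq_of_subset_of_ncard_le (SimpleGraph.edgeSet_mono h2.2) (by omega) (Set.toFinite _)
    · rfl

/-- block decomposition -/
lemma comp_sum {V : Type*} [Fintype V] (H : SimpleGraph V) (c : H.ConnectedComponent) (v : c.supp) :
    ∑ u, adjI H v u = ∑ u, adjI (H.induce c.supp) v u := by
  symm
  refine Fintype.sum_of_injective (Subtype.val) Subtype.val_injective _ _ ?_ ?_
  · intro u hu
    rw [adjI, if_neg]
    intro hadj
    apply hu
    refine ⟨⟨u, ?_⟩, rfl⟩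
    have := v.2
    rw [SimpleGraph.ConnectedComponent.mem_supp_iff] at this ⊢
    rw [← this]
    exact (SimpleGraph.ConnectedComponent.sound hadj.reachable).symm
  · intro u
    simp [adjI, SimpleGraph.comap_adj]

lemma det_slQ_prod {V : Type*} [Fintype V] (H : SimpleGraph V) :
    slD H = ∏ c : H.ConnectedComponent, slD (H.induce c.supp) := by
  let : LinearOrder H.ConnectedComponent :=
    LinearOrder.lift' (Fintype.equivFin H.ConnectedComponent) (Equiv.injective _)
  have hb : (slQ H).BlockTriangular H.connectedComponentMk := by
    intro i j hij
    rw [slQ_apply, adjI, if_neg, if_neg, add_zero]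
    · intro h
      exact hij.ne (SimpleGraph.ConnectedComponent.sound h.symm.reachable)
    · rintro rfl
      exact lt_irrefl _ hij
  refine (hb.det_fintype).trans ?_
  refine Finset.prod_congr rfl fun c _ => ?_
  let e : c.supp ≃ {a // H.connectedComponentMk a = c} := Equiv.subtypeEquivRight fun x => Iff.rfl
  rw [← Matrix.det_submatrix_equiv_self e]
  have : (slQ (H.induce c.supp)) = ((slQ H).toSquareBlock H.connectedComponentMk c).submatrix e e := by
    ext v w
    refine (slQ_apply _ v w).trans ?_
    rw [← comp_sum]
    refine Eq.trans ?_ (slQ_apply H v.1 w.1).symm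
    simp [adjI, SimpleGraph.comap_adj, Subtype.ext_iff]
  rw [slD, this]
  congr!

lemma two_edges {V : Type*} [Fintype V] (H : SimpleGraph V) :
    ∑ v, ∑ u, adjI H v u = 2 * H.edgeSet.ncard := by
  have := H.sum_degrees_eq_twice_card_edges
  rw [← Set.ncard_coe_finset, SimpleGraph.coe_edgeFinset] at this
  rw [show (2 * H.edgeSet.ncard : ℤ) = ((2 * H.edgeSet.ncard : ℕ) : ℤ) by push_cast; rfl, ← this]
  push_cast
  refine Finset.sum_congr rfl fun v _ => ?_
  exact deg_adjI H v

lemma sum_comps {V : Type*} [Fintype V] {M : Type*} [AddCommMonoid M] (H : SimpleGraph V)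
    (f : V → M) :
    ∑ c : H.ConnectedComponent, ∑ v : c.supp, f v = ∑ v, f v := by
  rw [← Fintype.sum_fiberwise H.connectedComponentMk f]
  refine Finset.sum_congr rfl fun c _ => ?_
  exact @Fintype.sum_equiv _ _ _ (_) (_) _ (Equiv.subtypeEquivRight fun x => Iff.rfl) _ _ fun x => rfl

lemma ncard_edges_comps {V : Type*} [Fintype V] (H : SimpleGraph V) :
    H.edgeSet.ncard = ∑ c : H.ConnectedComponent, (H.induce c.supp).edgeSet.ncard := by
  have h1 := two_edges H
  rw [← sum_comps H] at h1
  simp only [comp_sum, two_edges] at h1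
  rw [← Finset.mul_sum] at h1
  have := mul_left_cancel₀ two_ne_zero h1
  exact_mod_cast this.symm

lemma card_comps {V : Type*} [Fintype V] (H : SimpleGraph V) :
    Nat.card V = ∑ c : H.ConnectedComponent, Nat.card c.supp := by
  have := sum_comps H (fun _ => 1)
  simpa using this.symm

/-- bipartite graphs have singular signless Laplacian -/
lemma det_bip {V : Type*} [Fintype V] [Nonempty V] (K : SimpleGraph V) (h : K.IsBipartite) :
    slD K = 0 := by
  obtain ⟨C⟩ := h
  rw [slD, ← Matrix.exists_mulVec_eq_zero_iff]
  refine ⟨fun v => if C v = 0 then 1 else -1, ?_, ?_⟩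
  · obtain ⟨v⟩ := ‹Nonempty V›
    intro h
    have := congrFun h v
    simp only [Pi.zero_apply] at this
    split_ifs at this <;> omega
  · ext v
    simp only [Matrix.mulVec, dotProduct, slQ_apply, adjI, add_mul, Finset.sum_add_distrib, Pi.zero_apply]
    simp only [ite_mul, zero_mul, Finset.sum_ite_eq', Finset.mem_univ, if_true]
    rw [Finset.sum_mul, ← Finset.sum_add_distrib]
    apply Finset.sum_eq_zero
    intro u _
    by_cases hu : K.Adj v u
    · have := C.valid hu
      simp only [hu, if_true]
      have : C v = 0 ∧ C u = 1 ∨ C v = 1 ∧ C u = 0 := by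
        generalize C v = x at *; generalize C u = y at *
        revert x y; decide
      rcases this with ⟨h1, h2⟩ | ⟨h1, h2⟩ <;> simp [h1, h2]
    · simp [hu]

lemma det_tri {V : Type*} [Fintype V] (M : Matrix V V ℤ) (r : V → ℕ)
    (h : ∀ v w, v ≠ w → M v w ≠ 0 → r w < r v) : M.det = ∏ v, M v v := by
  rw [Matrix.det_apply]
  rw [Finset.sum_eq_single 1]
  · simp
  · intro σ _ hσ
    suffices ∏ i, M (σ i) i = 0 by rw [this, smul_zero]
    by_contra hne
    rw [← ne_eq, Finset.prod_ne_zero_iff] at hne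
    have hle : ∀ i ∈ univ, r i ≤ r (σ i) := fun i _ => by
      by_cases e : σ i = i
      · rw [e]
      · exact (h _ _ e (hne i (mem_univ i))).le
    have heq := (Finset.sum_eq_sum_iff_of_le hle).1 (Equiv.sum_comp σ r).symm
    apply hσ
    ext i
    by_contra e
    have e' : σ i ≠ i := e
    have := h _ _ e' (hne i (mem_univ i))
    have := heq i (mem_univ i)
    omega
  · simp

/-- connected, |E| = |V|, non-bipartite gives 4 -/
lemma det_unicyclic {V : Type*} [Fintype V] (K : SimpleGraph V) (hc : K.Connected)
    (hcard : K.edgeSet.ncard = Nat.card V) (hnb : ¬ K.IsBipartite) :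
    slD K = 4 := by
  obtain ⟨a⟩ := hc.nonempty
  have hpar : ∀ v, v ≠ a → ∃ u, K.Adj v u ∧ K.dist v a = K.dist u a + 1 := by
    intro v hv
    obtain ⟨p, hp⟩ := hc.exists_walk_length_eq_dist v a
    cases p with
    | nil => exact absurd rfl hv
    | cons h q =>
      refine ⟨_, h, ?_⟩
      have h1 := K.dist_le q
      have h2 := hc.dist_triangle (u := v) (v := _) (w := a) |>.trans
        (add_le_add_left (SimpleGraph.dist_eq_one_iff_adj.2 h).le _)
      simp only [SimpleGraph.Walk.length_cons] at hp
      omega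
  choose! g hg1 hg2 using hpar
  -- the tree edges
  have hinj : ∀ v w, v ≠ a → w ≠ a → s(v, g v) = s(w, g w) → v = w := by
    intro v w hv hw h
    rw [Sym2.eq_iff] at h
    rcases h with h | ⟨h1, h2⟩
    · exact h.1
    · have e1 := hg2 v hv
      have e2 := hg2 w hw
      rw [h2] at e1
      rw [← h1] at e2
      omega
  let T : Set (Sym2 V) := (fun v => s(v, g v)) '' {a}ᶜ
  have hT : T.ncard + 1 = Nat.card V := by
    have hinjOn : Set.InjOn (fun v => s(v, g v)) ({a}ᶜ : Set V) := fun v hv w hw => hinj v w hv hw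
    rw [show T.ncard = ({a}ᶜ : Set V).ncard from hinjOn.ncard_image, ← Set.ncard_singleton a,
      add_comm, Set.ncard_add_ncard_compl]
  have hTsub : T ⊆ K.edgeSet := by
    rintro _ ⟨v, hv, rfl⟩
    exact hg1 v hv
  obtain ⟨e, heK, heT⟩ : ∃ e ∈ K.edgeSet, e ∉ T := by
    by_contra! hcon
    have := Set.ncard_le_ncard (s := K.edgeSet) (t := T) hcon (Set.toFinite _)
    omega
  have hKT : K.edgeSet = insert e T := by
    symm
    apply Set.eq_of_subset_of_ncard_le (Set.insert_subset heK hTsub) _ (Set.toFinite _)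
    rw [Set.ncard_insert_of_notMem heT (Set.toFinite _)]
    omega
  induction e using Sym2.ind with | _ p q =>
  let σ : V → ℤ := fun v => (-1) ^ K.dist v a
  have hσsq : ∀ v, σ v * σ v = 1 := fun v => by
    simp only [σ]; rw [← pow_add, ← two_mul, pow_mul]; simp
  have hσg : ∀ v, v ≠ a → σ v + σ (g v) = 0 := by
    intro v hv
    simp only [σ, hg2 v hv, pow_succ]; ring
  have hσa : σ a = 1 := by simp [σ]
  have hpq : σ p = σ q := by
    by_contra hne
    apply hnb
    refine ⟨SimpleGraph.Coloring.mk (fun v => if σ v = 1 then (0 : Fin 2) else 1) ?_⟩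
    have key : ∀ x y, σ x ≠ σ y →
        (if σ x = 1 then (0 : Fin 2) else 1) ≠ (if σ y = 1 then (0 : Fin 2) else 1) := by
      intro x y hxy
      rcases mul_self_eq_one_iff.1 (hσsq x) with h1 | h1 <;>
      rcases mul_self_eq_one_iff.1 (hσsq y) with h2 | h2 <;> rw [h1, h2] at hxy ⊢ <;> simp at hxy ⊢
    intro v w hvw
    have hm : s(v, w) ∈ K.edgeSet := hvw
    rw [hKT] at hm
    apply key
    rcases hm with hm | ⟨u, hu, hm⟩
    · rw [Sym2.eq_iff] at hm
      rcases hm with ⟨rfl, rfl⟩ | ⟨rfl, rfl⟩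
      · exact hne
      · exact Ne.symm hne
    · have h3 := hσg u hu
      have h4 := hσsq u
      have : σ u ≠ σ (g u) := by
        intro h; rw [← h] at h3
        have : σ u = 0 := by omega
        simp [this] at h4
      rw [Sym2.eq_iff] at hm
      rcases hm with ⟨rfl, rfl⟩ | ⟨rfl, rfl⟩
      · exact this
      · exact this.symm
  let f : V → Sym2 V := fun v => if v = a then s(p, q) else s(v, g v)
  let A : V → V := fun v => if v = a then p else v
  let B : V → V := fun v => if v = a then q else g v
  have hAB : ∀ v, s(A v, B v) ∈ K.edgeSet := by
    intro v
    by_cases hv : v = a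
    · simpa [A, B, hv] using heK
    · simpa [A, B, hv] using hg1 v hv
  have hABinj : Function.Injective fun v => s(A v, B v) := by
    intro v w hvw
    simp only at hvw
    by_cases hv : v = a <;> by_cases hw : w = a
    · rw [hv, hw]
    · exfalso; apply heT; refine ⟨w, hw, ?_⟩
      simp only [A, B, hv, hw, if_true, if_false] at hvw
      exact hvw.symm
    · exfalso; apply heT; refine ⟨v, hv, ?_⟩
      simp only [A, B, hv, hw, if_true, if_false] at hvw
      exact hvw
    · simp only [A, B, hv, hw, if_false] at hvw
      exact hinj v w hv hw hvw
  have hrange : K.edgeSet = Set.range fun v => s(A v, B v) := by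
    symm
    apply Set.eq_of_subset_of_ncard_le _ _ (Set.toFinite _)
    · rintro _ ⟨v, rfl⟩; exact hAB v
    · rw [← Set.image_univ, Set.ncard_image_of_injective _ hABinj, Set.ncard_univ, hcard]
  let M : Matrix V V ℤ := Matrix.of fun v => slRow (A v) (B v)
  have hABne : ∀ v, A v ≠ B v := fun v => (show K.Adj _ _ from hAB v).ne
  have hMinc : ∀ v w, M v w = K.incMatrix ℤ w s(A v, B v) := by
    intro v w
    have h1 := hAB v
    have h2 := hABne v
    rw [SimpleGraph.incMatrix_apply']
    simp only [M, Matrix.of_apply, slRow, SimpleGraph.incidenceSet, Set.mem_ofPred_eq, h1, true_and,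
      Sym2.mem_iff]
    by_cases e1 : w = A v
    · subst e1; simp [h2]
    · simp [e1]
  have hQ : slQ K = M.transpose * M := by
    have h1 : slQ K = K.incMatrix ℤ * (K.incMatrix ℤ).transpose := by
      rw [SimpleGraph.incMatrix_mul_transpose, ← slQ_eq]
      ext v w
      simp only [Matrix.add_apply, Matrix.diagonal_apply, SimpleGraph.adjMatrix_apply,
        Matrix.of_apply]
      by_cases e : v = w
      · subst e; simp
      · simp [e]
    rw [h1]
    ext v w
    simp only [Matrix.mul_apply, Matrix.transpose_apply]
    symm
    refine Fintype.sum_of_injective (fun v => s(A v, B v)) hABinj _ _ ?_ ?_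
    · intro x hx
      rw [← hrange] at hx
      rw [SimpleGraph.incMatrix_of_notMem_incidenceSet, zero_mul]
      exact fun h => hx h.1
    · intro x
      rw [hMinc, hMinc]
  let X : Matrix V V ℤ := Matrix.of fun v w => if w = a then σ v else if v = w then 1 else 0
  have hX : X.det = 1 := by
    rw [det_tri X (fun v => if v = a then 0 else 1)]
    · apply Finset.prod_eq_one
      intro v _
      by_cases hv : v = a
      · simp [X, hv, hσa]
      · simp [X, hv]
    · intro v w hvw hne
      by_cases hw : w = a
      · subst hw; simp [hvw]
      · simp [X, hw, hvw] at hne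
  have hMXa : ∀ v, (M * X) v a = σ (A v) + σ (B v) := by
    intro v
    simp [Matrix.mul_apply, M, X, slRow, add_mul, Finset.sum_add_distrib]
  have hMXn : ∀ v w, w ≠ a → (M * X) v w = M v w := by
    intro v w hw
    simp [Matrix.mul_apply, X, hw]
  have hMX : (M * X).det = 2 * σ p := by
    rw [det_tri (M * X) (fun v => if v = a then (∑ u, K.dist u a) + 1 else K.dist v a)]
    · rw [Finset.prod_eq_single a]
      · rw [hMXa]; simp [A, B, ← hpq]; ring
      · intro v _ hv
        rw [hMXn v v hv]
        have := hABne v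
        simp [A, B, hv] at this
        simp [M, slRow, A, B, hv, this]
      · simp
    · intro v w hvw hne
      by_cases hv : v = a
      · have hw : w ≠ a := fun h => hvw (hv.trans h.symm)
        simp only [hv, hw, if_true, if_false]
        have := Finset.single_le_sum (f := fun u => K.dist u a) (fun _ _ => Nat.zero_le _)
          (mem_univ w)
        omega
      · by_cases hw : w = a
        · subst hw
          rw [hMXa] at hne
          simp [A, B, hv, hσg v hv] at hne
        · rw [hMXn v w hw] at hne
          simp only [hv, hw, if_false]
          simp [M, slRow, A, B, hv, Ne.symm hvw] at hne
          rw [hne, hg2 v hv]; omega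
  rw [Matrix.det_mul, hX, mul_one] at hMX
  rw [slD, hQ, Matrix.det_mul, Matrix.det_transpose, hMX]
  linear_combination 4 * hσsq p

lemma oddUni_nonbip {V : Type*} [Fintype V] (K : SimpleGraph V) (h : IsOddUnicyclic K) :
    ¬ K.IsBipartite := by
  obtain ⟨h1, h2, h3⟩ := h
  rintro ⟨C⟩
  have : ¬ K.IsAcyclic := by
    intro hac
    have := (SimpleGraph.isTree_iff_connected_and_card.1 ⟨h1, hac⟩).2
    rw [Nat.card_coe_set_eq] at this
    omega
  rw [SimpleGraph.IsAcyclic] at this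
  push Not at this
  obtain ⟨v, w, hw⟩ := this
  have h4 := h3 v w hw
  have D : K.Coloring Bool := K.recolorOfEquiv finTwoEquiv C
  rw [D.odd_length_iff_not_congr] at h4
  simp at h4

lemma oddUni_of_nonbip {V : Type*} [Fintype V] (K : SimpleGraph V) (h1 : K.Connected)
    (h2 : K.edgeSet.ncard = Nat.card V) (hnb : ¬ K.IsBipartite) : IsOddUnicyclic K := by
  refine ⟨h1, h2, ?_⟩
  intro v w hw
  by_contra hodd
  apply hnb
  cases w with
  | nil => simp at hw
  | @cons _ u _ h p =>
    rw [SimpleGraph.Walk.cons_isCycle_iff] at hw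
    have hnb : ¬ K.IsBridge s(v, u) := by
      intro hb
      rw [SimpleGraph.isBridge_iff_forall_cycle_notMem (show s(v, u) ∈ K.edgeSet from h)] at hb
      exact hb (SimpleGraph.Walk.cons h p) ((SimpleGraph.Walk.cons_isCycle_iff _ _).2 hw) (by simp)
    let T := K.deleteEdges {s(v, u)}
    have hTc : T.Connected := h1.connected_delete_edge_of_not_isBridge hnb
    have hE : T.edgeSet.ncard + 1 = Nat.card V := by
      rw [SimpleGraph.edgeSet_deleteEdges, Set.ncard_sdiff_singleton_add_one (show s(v, u) ∈ K.edgeSet from h) (Set.toFinite _), h2]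
    have hT : T.IsTree := by
      rw [SimpleGraph.isTree_iff_connected_and_card]
      exact ⟨hTc, by rw [Nat.card_coe_set_eq]; exact hE⟩
    obtain ⟨C⟩ := hT.isBipartite
    have D : T.Coloring Bool := T.recolorOfEquiv finTwoEquiv C
    have hp : ∀ e ∈ p.edges, e ∈ T.edgeSet := by
      intro e he
      rw [SimpleGraph.edgeSet_deleteEdges]
      refine ⟨p.edges_subset_edgeSet he, ?_⟩
      rintro rfl
      exact hw.2 he
    have hlen := D.odd_length_iff_not_congr (p.transfer T hp)
    rw [SimpleGraph.Walk.length_transfer] at hlen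
    rw [SimpleGraph.Walk.length_cons, Nat.odd_add_one, not_not] at hodd
    have hne := hlen.1 hodd
    have hne' : D u ≠ D v := by
      intro h; rw [h] at hne; exact (not_iff_self hne)
    refine ⟨K.recolorOfEquiv finTwoEquiv.symm (SimpleGraph.Coloring.mk D ?_)⟩
    intro x y hxy
    by_cases hm : s(x, y) = s(v, u)
    · rw [Sym2.eq_iff] at hm
      rcases hm with ⟨rfl, rfl⟩ | ⟨rfl, rfl⟩
      · exact hne'.symm
      · exact hne'
    · apply D.valid
      rw [SimpleGraph.deleteEdges_adj]
      exact ⟨hxy, hm⟩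

lemma slF_main {V : Type*} [Fintype V] (H : SimpleGraph V) :
    slF H = if AllCompsOddUnicyclic H then (4 : ℤ) ^ (Nat.card H.ConnectedComponent) else 0 := by
  split_ifs with h
  · rw [slF_eq, det_slQ_prod]
    · have h4 : ∀ c ∈ (univ : Finset H.ConnectedComponent), slD (H.induce c.supp) = 4 := fun c _ =>
        det_unicyclic _ (h c).1 (h c).2.1 (oddUni_nonbip _ (h c))
      rw [Finset.prod_congr rfl h4]
      simp
    · rw [ncard_edges_comps, card_comps H]
      exact Finset.sum_congr rfl fun c _ => (h c).2.1
  · by_cases hc : H.edgeSet.ncard = Nat.card V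
    · rw [slF_eq H hc]
      by_contra h0
      apply h
      rw [det_slQ_prod, ← ne_eq, Finset.prod_ne_zero_iff] at h0
      have hcon : ∀ c : H.ConnectedComponent, (H.induce c.supp).Connected := fun c =>
        c.connected_toSimpleGraph
      have hnb : ∀ c : H.ConnectedComponent, ¬ (H.induce c.supp).IsBipartite := by
        intro c hb
        have := (hcon c).nonempty
        exact h0 c (mem_univ c) (det_bip _ hb)
      have hle : ∀ c ∈ (univ : Finset H.ConnectedComponent),
          Nat.card c.supp ≤ (H.induce c.supp).edgeSet.ncard := by
        intro c _
        by_contra! hlt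
        apply hnb c
        have h5 := (hcon c).card_vert_le_card_edgeSet_add_one
        apply SimpleGraph.IsTree.isBipartite
        rw [SimpleGraph.isTree_iff_connected_and_card]
        refine ⟨hcon c, ?_⟩
        rw [Nat.card_coe_set_eq (SimpleGraph.edgeSet _)] at h5 ⊢
        omega
      rw [ncard_edges_comps, card_comps H] at hc
      have heq := (Finset.sum_eq_sum_iff_of_le hle).1 hc.symm
      intro c
      exact oddUni_of_nonbip _ (hcon c) (heq c (mem_univ c)).symm (hnb c)
    · exact slF_zero H hc

end Aux

open scoped Classical in
/-- The determinant of the signless Laplacian `Q = D + A` equals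
`Σ_H 4^{ω(H)}`, summed over the spanning subgraphs `H` of `G` all of whose
components are odd-unicyclic, where `ω(H)` is the number of components. -/
theorem stmt_13 {V : Type} [Fintype V] [DecidableEq V]
    (G : SimpleGraph V) [DecidableRel G.Adj] :
    (Matrix.diagonal (fun v => (G.degree v : ℤ)) + G.adjMatrix ℤ).det =
      ∑ H : SimpleGraph V,
        if H ≤ G ∧ AllCompsOddUnicyclic H then
          (4 : ℤ) ^ (Nat.card H.ConnectedComponent) else 0 := by
  rw [slQ_eq]
  have h0 : (slQ G).det = slD G := by
    rw [slD]; congr!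
  rw [h0, det_slQ_sum]
  refine Finset.sum_congr ?_ fun H _ => ?_
  · ext; simp
  · rw [slF_main]
    by_cases h1 : H ≤ G <;> by_cases h2 : AllCompsOddUnicyclic H <;> simp [h1, h2]
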